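/- For all x, y, z ∈ 𝓡 with x ⊕ z ∼ y ⊕ z, one has x ∼ y. -/

import Mathlib

/-- The ambient space `𝓡` of decimal representations: an integer part together
with a sequence of digits in `{0,…,9}`. -/
abbrev DecimalRep := ℤ × (ℕ → Fin 10)

namespace DecimalRep

open scoped Classical

/-- The truncation `[x]_k = x₀ + ∑_{i=1}^k x_i / 10^i` of `x` up to the `k`-th
digit, as a rational number. -/
def trunc (x : DecimalRep) (k : ℕ) : ℚ :=
  (x.1 : ℚ) + ∑ i ∈ Finset.range k, ((x.2 i : ℕ) : ℚ) / 10 ^ (i + 1)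

/-- The order `⪯` on `𝓡`: `x ⪯ y` iff every truncation of `x` is at most the
corresponding truncation of `y`. -/
def le (x y : DecimalRep) : Prop := ∀ k : ℕ, trunc x k ≤ trunc y k

/-- The strict order `≺` on `𝓡`. -/
def lt (x y : DecimalRep) : Prop := le x y ∧ x ≠ y

/-- Two decimal representations are equivalent ("have no gap") iff there is no
third element lying between them. -/
def equiv (x y : DecimalRep) : Prop :=
  ¬ ∃ z : DecimalRep, z ≠ x ∧ z ≠ y ∧
      ((le x z ∧ le z y) ∨ (le y z ∧ le z x))

/-- `𝓡₉`: decimal representations ending in an infinite string of nines. -/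
def allNines (x : DecimalRep) : Prop := ∃ N : ℕ, ∀ k ≥ N, x.2 k = 9

/-- `ℚ_F`: decimal representations ending in an infinite string of zeros. -/
def finiteDec (x : DecimalRep) : Prop := ∃ N : ℕ, ∀ k ≥ N, x.2 k = 0

/-- The decimal expansion map `ι : ℚ → 𝓡`, satisfying
`[ι(α)]_k = ⌊10^k·α⌋/10^k` for all `k`. -/
def iota (α : ℚ) : DecimalRep :=
  (⌊α⌋, fun k => ⟨(⌊α * 10 ^ (k + 1)⌋ % 10).toNat, by
    have h1 : (0 : ℤ) ≤ ⌊α * 10 ^ (k + 1)⌋ % 10 := Int.emod_nonneg _ (by norm_num)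
    have h2 : ⌊α * 10 ^ (k + 1)⌋ % 10 < 10 := Int.emod_lt_of_pos _ (by norm_num)
    omega⟩)

/-- `M` is a least upper bound of `W` in `(𝓡,⪯)`. -/
def IsLub (W : Set DecimalRep) (M : DecimalRep) : Prop :=
  (∀ w ∈ W, le w M) ∧ ∀ M' : DecimalRep, (∀ w ∈ W, le w M') → le M M'

/-- `M` is a greatest lower bound of `W` in `(𝓡,⪯)`. -/
def IsGlb (W : Set DecimalRep) (M : DecimalRep) : Prop :=
  (∀ w ∈ W, le M w) ∧ ∀ M' : DecimalRep, (∀ w ∈ W, le M' w) → le M' M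

/-- The least upper bound of a set in `(𝓡,⪯)` (junk value if none exists). -/
noncomputable def sup (W : Set DecimalRep) : DecimalRep :=
  if h : ∃ M, IsLub W M then h.choose else default

/-- The greatest lower bound of a set in `(𝓡,⪯)` (junk value if none exists). -/
noncomputable def inf (W : Set DecimalRep) : DecimalRep :=
  if h : ∃ M, IsGlb W M then h.choose else default

/-- Addition `x ⊕ y := sup {ι([x]_k + [y]_k) : k ∈ ℕ}` on `𝓡`. -/
noncomputable def add (x y : DecimalRep) : DecimalRep :=
  sup { z | ∃ k : ℕ, z = iota (trunc x k + trunc y k) }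

/-- The "additive inverse" map `Ψ(x₀.x₁x₂⋯) = (−1−x₀).(9−x₁)(9−x₂)⋯`. -/
def psi (x : DecimalRep) : DecimalRep :=
  (-1 - x.1, fun k => ⟨9 - (x.2 k).val, by have := (x.2 k).isLt; omega⟩)

/-- The signal map: `0` on the nonnegative part, `1` on the negative part. -/
noncomputable def sign (x : DecimalRep) : ℕ :=
  if le (iota 0) x then 0 else 1

/-- The absolute value `‖x‖ := max {x, Ψ(x)}` with respect to `⪯`. -/
noncomputable def norm (x : DecimalRep) : DecimalRep :=
  if le x (psi x) then psi x else x

/-- Multiplication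
`x ⊗ y := Ψ^(sign x + sign y) (sup {ι([‖x‖]_k · [‖y‖]_k) : k ∈ ℕ})` on `𝓡`. -/
noncomputable def mul (x y : DecimalRep) : DecimalRep :=
  psi^[sign x + sign y]
    (sup { z | ∃ k : ℕ, z = iota (trunc (norm x) k * trunc (norm y) k) })

/-- The multiplicative inverse
`x⁻¹ := Ψ^(sign x) (inf {ι(1/[‖x‖]_k) : k ∈ ℕ, [‖x‖]_k > 0})`. -/
noncomputable def inv (x : DecimalRep) : DecimalRep :=
  psi^[sign x]
    (inf { z | ∃ k : ℕ, 0 < trunc (norm x) k ∧ z = iota (1 / trunc (norm x) k) })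

/-- A sequence of rationals is Cauchy. -/
def IsCauchy (x : ℕ → ℚ) : Prop :=
  ∀ ε : ℚ, 0 < ε → ∃ N : ℕ, ∀ m n : ℕ, N ≤ m → N ≤ n → |x m - x n| < ε

/-- The upper limit `inf { sup {f k : k ≥ n} : n ∈ ℕ }` of a sequence in `𝓡`. -/
noncomputable def upperLimit (f : ℕ → DecimalRep) : DecimalRep :=
  inf { z | ∃ n : ℕ, z = sup { w | ∃ k : ℕ, n ≤ k ∧ w = f k } }

/-- The lower limit `sup { inf {f k : k ≥ n} : n ∈ ℕ }` of a sequence in `𝓡`. -/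
noncomputable def lowerLimit (f : ℕ → DecimalRep) : DecimalRep :=
  sup { z | ∃ n : ℕ, z = inf { w | ∃ k : ℕ, n ≤ k ∧ w = f k } }

end DecimalRep

/-!
A decimal representation `x` denotes the real number `toReal x`. The order `⪯` refines the order of
the denoted reals, and strict inequality of reals leaves room for a rational in between, whereas
along `a ≺ w ≺ b` the denoted real jumps at least once, since no digit sequence ends both in zeros
and in nines. So `x ∼ y` holds exactly when `toReal x = toReal y`. Since `toReal` carries suprema to
suprema, it turns `⊕` into addition of reals, where cancellation is available.
-/

namespace DecimalRep

open Filter Topology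

section ScaledTrunc

/-- The integer `10 ^ k * [x]_k`, defined by recursion on `k` (the digit `x_{k+1}` is `x.2 k`). It
identifies `𝓡` with the integer sequences `a` such that `a k` is the floor of `a (k + 1) / 10`. -/
def scaledTrunc (x : DecimalRep) : ℕ → ℤ
  | 0 => x.1
  | k + 1 => 10 * scaledTrunc x k + (x.2 k : ℕ)

theorem trunc_eq_scaledTrunc_div (x : DecimalRep) (k : ℕ) :
    trunc x k = scaledTrunc x k / 10 ^ k := by
  induction k with
  | zero => simp [trunc, scaledTrunc]
  | succ k ih =>
    rw [trunc, Finset.sum_range_succ, ← add_assoc, ← trunc, ih, scaledTrunc]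
    push_cast
    field

theorem trunc_le_trunc_iff {x y : DecimalRep} {k : ℕ} :
    trunc x k ≤ trunc y k ↔ scaledTrunc x k ≤ scaledTrunc y k := by
  rw [trunc_eq_scaledTrunc_div, trunc_eq_scaledTrunc_div,
    div_le_div_iff_of_pos_right (by positivity), Int.cast_le]

theorem scaledTrunc_succ_ediv (x : DecimalRep) (k : ℕ) :
    scaledTrunc x (k + 1) / 10 = scaledTrunc x k := by
  have := (x.2 k).isLt
  rw [scaledTrunc]
  omega

theorem scaledTrunc_injective : Function.Injective scaledTrunc := by
  intro x y h
  have hint : x.1 = y.1 := congrFun h 0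
  have hdigit (k : ℕ) : x.2 k = y.2 k := by
    have hk := congrFun h k
    have hk' := congrFun h (k + 1)
    simp only [scaledTrunc] at hk'
    omega
  exact Prod.ext hint (funext hdigit)

theorem exists_scaledTrunc_eq {a : ℕ → ℤ} (ha : ∀ k, a (k + 1) / 10 = a k) :
    ∃ x, scaledTrunc x = a := by
  refine ⟨(a 0, fun k => ⟨(a (k + 1) % 10).toNat, by omega⟩), funext fun k => ?_⟩
  induction k with
  | zero => rfl
  | succ k ih =>
    have := ha k
    rw [scaledTrunc, ih]
    dsimp only
    omega

theorem scaledTrunc_iota (q : ℚ) (k : ℕ) : scaledTrunc (iota q) k = ⌊q * 10 ^ k⌋ := by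
  induction k with
  | zero => simp [scaledTrunc, iota]
  | succ k ih =>
    have hdiv : ⌊q * 10 ^ (k + 1)⌋ / 10 = ⌊q * 10 ^ k⌋ := by
      rw [pow_succ, ← mul_assoc]
      exact_mod_cast Int.mul_natCast_floor_div_cancel (n := 10) (by simp) (q * 10 ^ k)
    rw [scaledTrunc, ih]
    dsimp only [iota]
    omega

end ScaledTrunc

section Trunc

theorem trunc_mono (x : DecimalRep) : Monotone (trunc x) :=
  monotone_nat_of_le_succ fun k => by
    rw [trunc, trunc, Finset.sum_range_succ, ← add_assoc]
    exact le_add_of_nonneg_right (by positivity)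

theorem trunc_add_inv_pow_le_of_lt {x y : DecimalRep} {k : ℕ} (h : trunc x k < trunc y k) :
    trunc x k + (10 ^ k)⁻¹ ≤ trunc y k := by
  have hsucc : (scaledTrunc x k + 1 : ℚ) ≤ scaledTrunc y k := by
    exact_mod_cast not_le.1 (trunc_le_trunc_iff.not.1 h.not_ge)
  calc
    trunc x k + (10 ^ k)⁻¹ = (scaledTrunc x k + 1) / 10 ^ k := by
      rw [trunc_eq_scaledTrunc_div, add_div, one_div]
    _ ≤ scaledTrunc y k / 10 ^ k := by gcongr
    _ = trunc y k := (trunc_eq_scaledTrunc_div y k).symm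

theorem antitone_trunc_add_inv_pow (x : DecimalRep) :
    Antitone fun k => trunc x k + (10 ^ k)⁻¹ :=
  antitone_nat_of_succ_le fun k => by
    have hdigit : ((x.2 k : ℕ) : ℚ) ≤ 9 := by exact_mod_cast Fin.is_le (x.2 k)
    calc
      trunc x (k + 1) + (10 ^ (k + 1))⁻¹
          = trunc x k + ((x.2 k : ℕ) + 1) / 10 ^ (k + 1) := by
        rw [trunc, trunc, Finset.sum_range_succ]
        ring
      _ ≤ trunc x k + (9 + 1) / 10 ^ (k + 1) := by gcongr
      _ = trunc x k + (10 ^ k)⁻¹ := by field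

theorem trunc_lt_trunc_add_inv_pow (x : DecimalRep) (k l : ℕ) :
    trunc x k < trunc x l + (10 ^ l)⁻¹ :=
  calc
    trunc x k ≤ trunc x (max k l) := trunc_mono x (le_max_left k l)
    _ < trunc x (max k l) + (10 ^ max k l)⁻¹ := lt_add_of_pos_right _ (by positivity)
    _ ≤ trunc x l + (10 ^ l)⁻¹ := antitone_trunc_add_inv_pow x (le_max_right k l)

end Trunc

section ToReal

/-- The real number denoted by a decimal representation. -/
noncomputable def toReal (x : DecimalRep) : ℝ := x.1 + Real.ofDigits x.2

theorem tendsto_trunc (x : DecimalRep) :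
    Tendsto (fun k => (trunc x k : ℝ)) atTop (𝓝 (toReal x)) := by
  have hsum := Real.summable_ofDigitsTerm (digits := x.2).hasSum.tendsto_sum_nat
  simpa [trunc, toReal, Real.ofDigits, Real.ofDigitsTerm, div_eq_mul_inv]
    using hsum.const_add (x.1 : ℝ)

theorem trunc_le_toReal (x : DecimalRep) (k : ℕ) : (trunc x k : ℝ) ≤ toReal x :=
  (Rat.cast_mono.comp (trunc_mono x)).ge_of_tendsto (tendsto_trunc x) k

theorem toReal_le_trunc_add_inv_pow (x : DecimalRep) (k : ℕ) :
    toReal x ≤ (trunc x k + (10 ^ k)⁻¹ : ℚ) :=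
  le_of_tendsto' (tendsto_trunc x) fun j =>
    Rat.cast_le.2 (trunc_lt_trunc_add_inv_pow x j k).le

theorem toReal_le_of_trunc_lt {x y : DecimalRep} {k : ℕ} (h : trunc x k < trunc y k) :
    toReal x ≤ trunc y k :=
  (toReal_le_trunc_add_inv_pow x k).trans (Rat.cast_le.2 (trunc_add_inv_pow_le_of_lt h))

theorem toReal_mono {x y : DecimalRep} (h : le x y) : toReal x ≤ toReal y :=
  le_of_tendsto_of_tendsto' (tendsto_trunc x) (tendsto_trunc y) fun k => Rat.cast_le.2 (h k)

theorem le_of_toReal_lt {x y : DecimalRep} (h : toReal x < toReal y) : le x y := by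
  intro k
  by_contra! hk
  exact h.not_ge ((toReal_le_of_trunc_lt hk).trans (trunc_le_toReal x k))

theorem toReal_iota (q : ℚ) : toReal (iota q) = q := by
  have htrunc (k : ℕ) : trunc (iota q) k = ⌊q * 10 ^ k⌋ / 10 ^ k := by
    rw [trunc_eq_scaledTrunc_div, scaledTrunc_iota]
  have hlower (k : ℕ) : trunc (iota q) k ≤ q := by
    rw [htrunc, div_le_iff₀ (by positivity)]
    exact Int.floor_le _
  have hupper (k : ℕ) : q ≤ trunc (iota q) k + (10 ^ k)⁻¹ := by
    rw [htrunc, ← one_div, ← add_div, le_div_iff₀ (by positivity)]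
    exact (Int.lt_floor_add_one _).le
  have hlim : Tendsto (fun k => ((trunc (iota q) k + (10 ^ k)⁻¹ : ℚ) : ℝ)) atTop
      (𝓝 (toReal (iota q))) := by
    have hpow := tendsto_inv_atTop_zero.comp
      (tendsto_pow_atTop_atTop_of_one_lt (by norm_num : (1 : ℝ) < 10))
    simpa using (tendsto_trunc (iota q)).add hpow
  exact (le_of_tendsto' (tendsto_trunc (iota q)) fun k => Rat.cast_le.2 (hlower k)).antisymm
    (ge_of_tendsto' hlim fun k => Rat.cast_le.2 (hupper k))

end ToReal

section Equiv

theorem exists_trunc_lt_of_lt {x y : DecimalRep} (h : lt x y) : ∃ k, trunc x k < trunc y k := by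
  by_contra! hle
  exact h.2 <| scaledTrunc_injective <| funext fun k =>
    (trunc_le_trunc_iff.1 (h.1 k)).antisymm (trunc_le_trunc_iff.1 (hle k))

theorem toReal_lt_of_lt_of_lt {x w y : DecimalRep} (hxw : lt x w) (hwy : lt w y) :
    toReal x < toReal y := by
  obtain ⟨k, hk⟩ := exists_trunc_lt_of_lt hxw
  obtain ⟨l, hl⟩ := exists_trunc_lt_of_lt hwy
  calc
    toReal x ≤ trunc w k := toReal_le_of_trunc_lt hk
    _ < (trunc w l + (10 ^ l)⁻¹ : ℚ) := Rat.cast_lt.2 (trunc_lt_trunc_add_inv_pow w k l)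
    _ ≤ trunc y l := Rat.cast_le.2 (trunc_add_inv_pow_le_of_lt hl)
    _ ≤ toReal y := trunc_le_toReal y l

theorem exists_lt_and_lt_of_toReal_lt {x y : DecimalRep} (h : toReal x < toReal y) :
    ∃ w, lt x w ∧ lt w y := by
  obtain ⟨q, hxq, hqy⟩ := exists_rat_btwn h
  rw [← toReal_iota q] at hxq hqy
  exact ⟨iota q, ⟨le_of_toReal_lt hxq, fun hx => hxq.ne (congrArg toReal hx)⟩,
    ⟨le_of_toReal_lt hqy, fun hy => hqy.ne (congrArg toReal hy)⟩⟩

theorem equiv_iff_not_exists_lt_lt {x y : DecimalRep} :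
    equiv x y ↔ (¬ ∃ w, lt x w ∧ lt w y) ∧ ¬ ∃ w, lt y w ∧ lt w x := by
  simp only [equiv, lt, ← not_or, ← exists_or, ne_eq, @eq_comm _ x, @eq_comm _ y]
  refine not_congr (exists_congr fun w => ?_)
  tauto

theorem equiv_iff_toReal_eq {x y : DecimalRep} : equiv x y ↔ toReal x = toReal y := by
  have hlt (a b : DecimalRep) : (∃ w, lt a w ∧ lt w b) ↔ toReal a < toReal b :=
    ⟨fun ⟨_, haw, hwb⟩ => toReal_lt_of_lt_of_lt haw hwb, exists_lt_and_lt_of_toReal_lt⟩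
  rw [equiv_iff_not_exists_lt_lt, hlt, hlt, not_lt, not_lt, le_antisymm_iff, and_comm]

end Equiv

section Sup

variable {W : Set DecimalRep}

theorem exists_isGreatest_scaledTrunc (hne : W.Nonempty) (hbdd : BddAbove (toReal '' W)) :
    ∃ M, ∀ k, IsGreatest ((scaledTrunc · k) '' W) (scaledTrunc M k) := by
  obtain ⟨C, hC⟩ := hbdd
  have hbound (k : ℕ) : BddAbove ((scaledTrunc · k) '' W) := by
    refine ⟨⌊C * 10 ^ k⌋, Set.forall_mem_image.2 fun w hw => Int.le_floor.2 ?_⟩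
    have htrunc : (trunc w k : ℝ) ≤ C :=
      (trunc_le_toReal w k).trans (hC (Set.mem_image_of_mem toReal hw))
    rw [trunc_eq_scaledTrunc_div] at htrunc
    push_cast at htrunc
    exact (div_le_iff₀ (by positivity)).1 htrunc
  have hmax (k : ℕ) : IsGreatest ((scaledTrunc · k) '' W) (sSup ((scaledTrunc · k) '' W)) :=
    ⟨Int.csSup_mem (hne.image _) (hbound k), fun _ h => le_csSup (hbound k) h⟩
  have hdiv_mono : Monotone fun n : ℤ => n / 10 := fun _ _ => Int.ediv_le_ediv (by norm_num)
  obtain ⟨M, hM⟩ : ∃ M, scaledTrunc M = fun k => sSup ((scaledTrunc · k) '' W) := by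
    refine exists_scaledTrunc_eq fun k => ?_
    have hdiv := hdiv_mono.map_isGreatest (hmax (k + 1))
    simp only [Set.image_image, scaledTrunc_succ_ediv] at hdiv
    exact hdiv.unique (hmax k)
  exact ⟨M, fun k => congrFun hM k ▸ hmax k⟩

theorem isLub_of_isGreatest_scaledTrunc {M : DecimalRep}
    (hM : ∀ k, IsGreatest ((scaledTrunc · k) '' W) (scaledTrunc M k)) : IsLub W M := by
  refine ⟨fun w hw k => trunc_le_trunc_iff.2 ((hM k).2 (Set.mem_image_of_mem _ hw)),
    fun M' hM' k => ?_⟩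
  obtain ⟨w, hw, hwM⟩ := (hM k).1
  exact trunc_le_trunc_iff.2 (hwM ▸ trunc_le_trunc_iff.1 (hM' w hw k))

theorem isLUB_toReal_of_isGreatest_scaledTrunc {M : DecimalRep}
    (hM : ∀ k, IsGreatest ((scaledTrunc · k) '' W) (scaledTrunc M k)) :
    IsLUB (toReal '' W) (toReal M) := by
  refine ⟨Set.forall_mem_image.2 fun w hw =>
    toReal_mono ((isLub_of_isGreatest_scaledTrunc hM).1 w hw), fun C hC => ?_⟩
  refine le_of_tendsto' (tendsto_trunc M) fun k => ?_
  obtain ⟨w, hw, hwM⟩ := (hM k).1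
  rw [trunc_eq_scaledTrunc_div, ← hwM, ← trunc_eq_scaledTrunc_div]
  exact (trunc_le_toReal w k).trans (hC (Set.mem_image_of_mem toReal hw))

theorem IsLub.toReal_eq {M M' : DecimalRep} (hM : IsLub W M) (hM' : IsLub W M') :
    toReal M = toReal M' :=
  (toReal_mono (hM.2 M' hM'.1)).antisymm (toReal_mono (hM'.2 M hM.1))

theorem isLUB_toReal_sup (hne : W.Nonempty) (hbdd : BddAbove (toReal '' W)) :
    IsLUB (toReal '' W) (toReal (sup W)) := by
  obtain ⟨M, hM⟩ := exists_isGreatest_scaledTrunc hne hbdd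
  have hlub : IsLub W M := isLub_of_isGreatest_scaledTrunc hM
  have hsup : IsLub W (sup W) := by
    rw [sup, dif_pos ⟨M, hlub⟩]
    exact Exists.choose_spec _
  rw [hsup.toReal_eq hlub]
  exact isLUB_toReal_of_isGreatest_scaledTrunc hM

end Sup

theorem toReal_add (x y : DecimalRep) : toReal (add x y) = toReal x + toReal y := by
  set W : Set DecimalRep := {z | ∃ k : ℕ, z = iota (trunc x k + trunc y k)}
  have himage : toReal '' W = Set.range fun k => (trunc x k : ℝ) + trunc y k := by
    have hW : W = Set.range fun k => iota (trunc x k + trunc y k) :=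
      Set.ext fun _ => exists_congr fun _ => eq_comm
    rw [hW, ← Set.range_comp]
    simp only [Function.comp_def, toReal_iota, Rat.cast_add]
  have hlub : IsLUB (toReal '' W) (toReal x + toReal y) := by
    rw [himage]
    exact isLUB_of_tendsto_atTop
      (fun _ _ h => add_le_add (Rat.cast_le.2 (trunc_mono x h)) (Rat.cast_le.2 (trunc_mono y h)))
      ((tendsto_trunc x).add (tendsto_trunc y))
  exact (isLUB_toReal_sup (W := W) ⟨_, 0, rfl⟩ ⟨_, hlub.1⟩).unique hlub

end DecimalRep

open DecimalRep in
/-- Cancellation for addition on `𝓡`: `x ⊕ z ∼ y ⊕ z` implies `x ∼ y`. -/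
theorem equiv_of_add_equiv (x y z : DecimalRep) (h : equiv (add x z) (add y z)) :
    equiv x y := by
  rw [equiv_iff_toReal_eq] at h ⊢
  rw [toReal_add, toReal_add] at h
  exact add_right_cancel h
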